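/- Let x be a positive irrational real number, let p be a prime with p < x, and let a be a squarefree positive integer with a > px, divisible by p, all of whose prime factors are less than x. Then for every integer k with 1 ≤ k ≤ p−1 one has {x/a} < {kN_p/a}; in particular there is no k with 1 ≤ k ≤ p−1 satisfying {x/a} > {kN_p/a}. -/

import Mathlib

open scoped Classical
open Finset

noncomputable section

/-- Sum of the Möbius function over positive integers `a` in the open interval `(u, v)`
that are *not* divisible by `p`. -/
def Mp' (p : ℕ) (u v : ℝ) : ℤ :=
  ∑ a ∈ (Finset.Icc 1 ⌈v⌉₊).filter
      (fun a : ℕ => u < (a : ℝ) ∧ (a : ℝ) < v ∧ ¬ p ∣ a),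
    ArithmeticFunction.moebius a

/-- Sum of the Möbius function over positive integers `a` in the open interval `(u, v)`
that *are* divisible by `p`. -/
def Mp (p : ℕ) (u v : ℝ) : ℤ :=
  ∑ a ∈ (Finset.Icc 1 ⌈v⌉₊).filter
      (fun a : ℕ => u < (a : ℝ) ∧ (a : ℝ) < v ∧ p ∣ a),
    ArithmeticFunction.moebius a

/-- `Sx y u v` : the set of positive integers in the open interval `(u, v)` all of whose
prime divisors exceed `y`. -/
def Sx (y u v : ℝ) : Set ℕ :=
  {a : ℕ | 0 < a ∧ u < (a : ℝ) ∧ (a : ℝ) < v ∧ ∀ q : ℕ, q.Prime → q ∣ a → y < (q : ℝ)}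

/-- `Np x p` : the product of all primes `q < x` with `q ≠ p`. -/
def Np (x : ℝ) (p : ℕ) : ℕ :=
  ∏ q ∈ (Finset.range ⌈x⌉₊).filter (fun q : ℕ => q.Prime ∧ (q : ℝ) < x ∧ q ≠ p), q

/-- `Aset x j` : squarefree positive integers with exactly `j` prime factors,
all of them less than `x`. -/
def Aset (x : ℝ) (j : ℕ) : Finset ℕ :=
  (Finset.Icc 1 (⌈x⌉₊ ^ j)).filter
    (fun a => Squarefree a ∧ a.primeFactors.card = j ∧ ∀ q ∈ a.primeFactors, (q : ℝ) < x)

/-- `Nint a b` : the number of integers in the open interval `(a, b)`. -/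
def Nint (a b : ℝ) : ℕ :=
  (Finset.Ioo ⌊a⌋ ⌈b⌉).card

/-- `Rres a b = (b - a) - N(a, b)`. -/
def Rres (a b : ℝ) : ℝ :=
  (b - a) - Nint a b

/-- `piR t` : the number of primes `≤ t`. -/
def piR (t : ℝ) : ℕ :=
  Nat.primeCounting ⌊t⌋₊

/-!
Write `a = p * b`. As `a` is squarefree, `b` is a product of distinct primes `q < x` with `q ≠ p`,
so `b` divides both `a` and `k * N_p`, whereas `p`, hence `a`, does not divide `k * N_p`. The
residue of `k * N_p` modulo `a` is therefore a positive multiple of `b`, which gives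
`b / a ≤ {k * N_p / a}`, and `p * x < a = p * b` says that `x < b`.
-/

lemma fract_le_self_of_nonneg {R : Type*} [Ring R] [LinearOrder R] [IsOrderedRing R]
    [FloorRing R] {r : R} (hr : 0 ≤ r) : Int.fract r ≤ r :=
  sub_le_self r (Int.cast_nonneg (Int.floor_nonneg.mpr hr))

lemma natCast_div_le_fract_intCast_div {R : Type*} [Field R] [LinearOrder R]
    [IsStrictOrderedRing R] [FloorRing R] {d n : ℕ} {m : ℤ} (hn : n ≠ 0) (hdn : d ∣ n)
    (hdm : (d : ℤ) ∣ m) (hnm : ¬ (n : ℤ) ∣ m) : (d : R) / n ≤ Int.fract ((m : R) / n) := by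
  have mod_pos : 0 < m % n :=
    (Int.emod_nonneg m (mod_cast hn)).lt_of_ne' fun h => hnm (Int.dvd_of_emod_eq_zero h)
  have dvd_mod : (d : ℤ) ∣ m % n :=
    (EuclideanDomain.dvd_mod_iff (Int.natCast_dvd_natCast.mpr hdn)).mpr hdm
  have le_mod : (d : R) ≤ (m % n : ℤ) := mod_cast Int.le_of_dvd mod_pos dvd_mod
  rw [Int.fract_div_intCast_eq_div_intCast_mod]
  gcongr

section Np

variable {x : ℝ} {p : ℕ}

lemma prime_not_dvd_Np (hp : p.Prime) : ¬ p ∣ Np x p := by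
  intro h
  obtain ⟨q, hq, hpq⟩ := (hp.prime.dvd_finsetProd_iff _).mp h
  obtain ⟨-, q_prime, -, q_ne_p⟩ := Finset.mem_filter.mp hq
  exact q_ne_p ((Nat.prime_dvd_prime_iff_eq hp q_prime).mp hpq).symm

lemma dvd_Np_of_squarefree {b : ℕ} (hb : Squarefree b) (hpb : ¬ p ∣ b)
    (hbx : ∀ q ∈ b.primeFactors, (q : ℝ) < x) : b ∣ Np x p := by
  rw [← Nat.prod_primeFactors_of_squarefree hb]
  refine Finset.prod_dvd_prod_of_subset _ _ _ fun q hq => ?_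
  have q_ne_p : q ≠ p := fun h => hpb (h ▸ Nat.dvd_of_mem_primeFactors hq)
  exact Finset.mem_filter.mpr ⟨Finset.mem_range.mpr (Nat.lt_ceil.mpr (hbx q hq)),
    Nat.prime_of_mem_primeFactors hq, hbx q hq, q_ne_p⟩

end Np

theorem stmt_17_general {x : ℝ} {p a : ℕ} (hp : p.Prime) (ha : (p : ℝ) * x < a)
    (hsf : Squarefree a) (hpa : p ∣ a) (hfac : ∀ q ∈ a.primeFactors, (q : ℝ) < x)
    {k : ℤ} (hk : ¬ (p : ℤ) ∣ k) :
    Int.fract (x / a) < Int.fract (((k : ℝ) * Np x p) / a) := by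
  have a_ne_zero : a ≠ 0 := hsf.ne_zero
  have x_pos : 0 < x :=
    p.cast_nonneg.trans_lt (hfac p (Nat.mem_primeFactors.mpr ⟨hp, hpa, a_ne_zero⟩))
  have not_dvd : ¬ (a : ℤ) ∣ k * Np x p := fun h =>
    ((Nat.prime_iff_prime_int.mp hp).dvd_or_dvd ((Int.natCast_dvd_natCast.mpr hpa).trans h)).elim
      hk fun h => prime_not_dvd_Np hp (Int.natCast_dvd_natCast.mp h)
  obtain ⟨b, hab⟩ := hpa
  have b_dvd_a : b ∣ a := hab ▸ dvd_mul_left b p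
  have p_not_dvd_b : ¬ p ∣ b :=
    hp.coprime_iff_not_dvd.mp (Nat.squarefree_mul_iff.mp (hab ▸ hsf)).1
  have b_dvd_Np : b ∣ Np x p :=
    dvd_Np_of_squarefree (hsf.squarefree_of_dvd b_dvd_a) p_not_dvd_b fun q hq =>
      hfac q (Nat.primeFactors_mono b_dvd_a a_ne_zero hq)
  have x_lt_b : x < b := by
    rw [hab, Nat.cast_mul] at ha
    exact lt_of_mul_lt_mul_left ha p.cast_nonneg
  calc Int.fract (x / a) ≤ x / a := fract_le_self_of_nonneg (by positivity)
    _ < b / a := by gcongr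
    _ ≤ Int.fract (((k * Np x p : ℤ) : ℝ) / a) :=
        natCast_div_le_fract_intCast_div a_ne_zero b_dvd_a
          ((Int.natCast_dvd_natCast.mpr b_dvd_Np).mul_left k) not_dvd
    _ = Int.fract (((k : ℝ) * Np x p) / a) := by
        rw [Int.cast_mul, Int.cast_natCast]

theorem stmt_17 (x : ℝ) (hx : 0 < x) (hxirr : Irrational x)
    (p : ℕ) (hp : p.Prime) (hpx : (p : ℝ) < x)
    (a : ℕ) (ha : (p : ℝ) * x < a) (hsf : Squarefree a) (hpa : p ∣ a)
    (hfac : ∀ q ∈ a.primeFactors, (q : ℝ) < x) :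
    (∀ k : ℕ, 1 ≤ k → k ≤ p - 1 →
        Int.fract (x / a) < Int.fract (((k : ℝ) * Np x p) / a))
      ∧ ¬∃ k : ℕ, 1 ≤ k ∧ k ≤ p - 1 ∧
          Int.fract (((k : ℝ) * Np x p) / a) < Int.fract (x / a) := by
  have fract_lt (k : ℕ) (hk₁ : 1 ≤ k) (hk₂ : k ≤ p - 1) :
      Int.fract (x / a) < Int.fract (((k : ℝ) * Np x p) / a) := by
    have p_not_dvd_k : ¬ p ∣ k := Nat.not_dvd_of_pos_of_lt hk₁ (Nat.lt_of_le_pred hp.pos hk₂)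
    simpa only [Int.cast_natCast] using
      stmt_17_general hp ha hsf hpa hfac (Int.natCast_dvd_natCast.not.mpr p_not_dvd_k)
  exact ⟨fract_lt, fun ⟨k, hk₁, hk₂, hlt⟩ => hlt.asymm (fract_lt k hk₁ hk₂)⟩

end
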